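/- arXiv:cs/0312045 — 2 statements merged into one kernel-verified Lean document; each statement's English description precedes it below -/
import Mathlib

section
/- Let Ω be a program with weight constraints and let Π₂ be the set of rules ⊥ ← not [C₀], [C₁],…,[C_n] for every rule C₀ ← C₁,…,C_n of Ω. Then for any consistent set Z of literals, Z ⊨ Ω if and only if Z ⊨ Π₂. -/
open Classical

/-- A literal: a propositional atom `a` or its classical negation `¬ a`. -/
inductive Lit (α : Type) where
  | pos : α → Lit α
  | neg : α → Lit α

/-- The atom of a literal. -/
def Lit.atom {α : Type} : Lit α → α
  | .pos a => a
  | .neg a => a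

/-- Mapping literals along a map of atoms. -/
def Lit.map {α β : Type} (f : α → β) : Lit α → Lit β
  | .pos a => .pos (f a)
  | .neg a => .neg (f a)

/-- A set of literals is consistent if it contains no pair `a`, `¬ a`. -/
def LitConsistent {α : Type} (Z : Set (Lit α)) : Prop :=
  ∀ a : α, ¬(Lit.pos a ∈ Z ∧ Lit.neg a ∈ Z)

/-- Formulas (nested expressions): elementary formulas are literals, `⊥` and `⊤`;
formulas are built from them using negation as failure `naf`, conjunction `conj`
and disjunction `disj`. -/
inductive Formula (α : Type) where
  | lit : Lit α → Formula α
  | fbot : Formula α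
  | ftop : Formula α
  | naf : Formula α → Formula α
  | conj : Formula α → Formula α → Formula α
  | disj : Formula α → Formula α → Formula α

/-- Satisfaction of a formula by a set of literals. -/
def Formula.sat {α : Type} (Z : Set (Lit α)) : Formula α → Prop
  | .lit l => l ∈ Z
  | .fbot => False
  | .ftop => True
  | .naf F => ¬ F.sat Z
  | .conj F G => F.sat Z ∧ G.sat Z
  | .disj F G => F.sat Z ∨ G.sat Z

/-- A rule with nested expressions: `head ← body`. -/
structure NRule (α : Type) where
  head : Formula α
  body : Formula α

/-- `Z` satisfies a program (a set of rules). -/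
def progSat {α : Type} (Z : Set (Lit α)) (P : Set (NRule α)) : Prop :=
  ∀ r ∈ P, r.body.sat Z → r.head.sat Z

/-- The reduct `F^Z` of a formula relative to a set of literals `Z`. -/
noncomputable def Formula.reduct {α : Type} (Z : Set (Lit α)) : Formula α → Formula α
  | .lit l => .lit l
  | .fbot => .fbot
  | .ftop => .ftop
  | .naf F => if F.sat Z then .fbot else .ftop
  | .conj F G => .conj (F.reduct Z) (G.reduct Z)
  | .disj F G => .disj (F.reduct Z) (G.reduct Z)

/-- The reduct `Π^Z` of a program. -/
noncomputable def progReduct {α : Type} (Z : Set (Lit α)) (P : Set (NRule α)) : Set (NRule α) :=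
  (fun r : NRule α => NRule.mk (r.head.reduct Z) (r.body.reduct Z)) '' P

/-- `Z` is minimal (under inclusion) among the consistent sets of literals satisfying `P`. -/
def MinimalSat {α : Type} (Z : Set (Lit α)) (P : Set (NRule α)) : Prop :=
  LitConsistent Z ∧ progSat Z P ∧
    ∀ Z' : Set (Lit α), LitConsistent Z' → progSat Z' P → Z' ⊆ Z → Z' = Z

/-- `Z` is an answer set for a program `P` with nested expressions:
`Z` is minimal among the consistent sets satisfying the reduct `P^Z`. -/
def AnswerSet {α : Type} (Z : Set (Lit α)) (P : Set (NRule α)) : Prop :=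
  MinimalSat Z (progReduct Z P)

/-- Strong equivalence of programs with nested expressions. -/
def StrongEq {α : Type} (P₁ P₂ : Set (NRule α)) : Prop :=
  ∀ P : Set (NRule α), ∀ Z : Set (Lit α), AnswerSet Z (P₁ ∪ P) ↔ AnswerSet Z (P₂ ∪ P)

/-- Multiple conjunction (the empty conjunction is `⊤`). -/
def bigConj {α : Type} : List (Formula α) → Formula α
  | [] => .ftop
  | F :: Fs => .conj F (bigConj Fs)

/-- Multiple disjunction (the empty disjunction is `⊥`). -/
def bigDisj {α : Type} : List (Formula α) → Formula α
  | [] => .fbot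
  | F :: Fs => .disj F (bigDisj Fs)

/-- `⟨F₁,…,F_n⟩:X`: the disjunction over `I ∈ X` of the conjunctions of the `Fᵢ`, `i ∈ I`. -/
noncomputable def angled {α : Type} {n : ℕ} (F : Fin n → Formula α) (X : Finset (Finset (Fin n))) :
    Formula α :=
  bigDisj (X.toList.map fun I => bigConj (I.toList.map F))
/-- A rule element: a literal (positive rule element) or a literal
prefixed with negation as failure (negative rule element). -/
inductive RElem (α : Type) where
  | pos : Lit α → RElem α
  | neg : Lit α → RElem α

/-- Satisfaction of a rule element by a set of literals. -/
def RElem.sat {α : Type} (Z : Set (Lit α)) : RElem α → Prop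
  | .pos l => l ∈ Z
  | .neg l => l ∉ Z

/-- Whether a rule element is negative. -/
def RElem.isNegB {α : Type} : RElem α → Bool
  | .pos _ => false
  | .neg _ => true

/-- The sum of the weights of the entries of `S` that are satisfied by `Z`. -/
noncomputable def weightSum {α : Type} (Z : Set (Lit α)) (S : List (RElem α × ℝ)) : ℝ :=
  (S.map fun p => if p.1.sat Z then p.2 else 0).sum

/-- A weight constraint `L ≤ {c₁=w₁,…,c_m=w_m} ≤ U` with nonnegative weights;
`L` and `U` may be `−∞`/`+∞`. -/
structure WConstraint (α : Type) where
  L : EReal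
  S : List (RElem α × ℝ)
  U : EReal
  nonneg : ∀ p ∈ S, (0 : ℝ) ≤ p.2

/-- `Z` satisfies the weight constraint `L ≤ S ≤ U`. -/
def WConstraint.sat {α : Type} (Z : Set (Lit α)) (C : WConstraint α) : Prop :=
  C.L ≤ (weightSum Z C.S : EReal) ∧ (weightSum Z C.S : EReal) ≤ C.U

/-- A rule with weight constraints, `C₀ ← C₁,…,C_n`. -/
structure WRule (α : Type) where
  head : WConstraint α
  body : List (WConstraint α)

/-- `Z` satisfies a program with weight constraints. -/
def wProgSat {α : Type} (Z : Set (Lit α)) (Ω : Set (WRule α)) : Prop :=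
  ∀ R ∈ Ω, (∀ C ∈ R.body, C.sat Z) → R.head.sat Z

/-- A weight constraint of the form `L ≤ S` (no upper bound), with nonnegative weights. -/
structure LConstraint (α : Type) where
  L : EReal
  S : List (RElem α × ℝ)
  nonneg : ∀ p ∈ S, (0 : ℝ) ≤ p.2

/-- Satisfaction of a lower-bound constraint (by an arbitrary set of literals). -/
def LConstraint.sat {α : Type} (Z : Set (Lit α)) (C : LConstraint α) : Prop :=
  C.L ≤ (weightSum Z C.S : EReal)

/-- A Horn rule: a literal as head, lower-bound constraints as body. -/
structure HornRule (α : Type) where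
  head : Lit α
  body : List (LConstraint α)

/-- Satisfaction of a set of Horn rules by an arbitrary set of literals. -/
def hornSat {α : Type} (Z : Set (Lit α)) (P : Set (HornRule α)) : Prop :=
  ∀ r ∈ P, (∀ C ∈ r.body, C.sat Z) → r.head ∈ Z

/-- The deductive closure of a set of Horn rules: its unique minimal satisfying
set of literals (the intersection of all satisfying sets). -/
def cl {α : Type} (P : Set (HornRule α)) : Set (Lit α) :=
  ⋂₀ {Z : Set (Lit α) | hornSat Z P}

/-- The sum of the weights of the negative entries of `S` satisfied by `Z`. -/
noncomputable def negSatWeight {α : Type} (Z : Set (Lit α)) (S : List (RElem α × ℝ)) : ℝ :=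
  (S.map fun p => if p.1.isNegB = true ∧ p.1.sat Z then p.2 else 0).sum

/-- The reduct `(L ≤ S)^Z` of a lower-bound constraint: drop the negative entries
of `S` and decrease `L` by the total weight of the negative entries satisfied by `Z`. -/
noncomputable def LConstraint.reduct {α : Type} (Z : Set (Lit α)) (C : LConstraint α) :
    LConstraint α :=
  ⟨C.L - ((negSatWeight Z C.S : ℝ) : EReal),
   C.S.filter (fun p => !p.1.isNegB),
   fun p hp => C.nonneg p (List.mem_of_mem_filter hp)⟩

/-- The lower-bound part `L ≤ S` of a weight constraint `L ≤ S ≤ U`. -/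
def WConstraint.lower {α : Type} (C : WConstraint α) : LConstraint α :=
  ⟨C.L, C.S, C.nonneg⟩

/-- The positive rule elements (as literals) occurring in `S`. -/
def posElems {α : Type} (S : List (RElem α × ℝ)) : Set (Lit α) :=
  {l : Lit α | ∃ w : ℝ, (RElem.pos l, w) ∈ S}

/-- The reduct `Ω^Z` of a program with weight constraints: for each rule
`L₀≤S₀≤U₀ ← C₁,…,C_n` whose upper bounds are all satisfied by `Z`, the Horn rules
`l ← C₁^Z,…,C_n^Z` for all positive rule elements `l` of `S₀` with `l ∈ Z`. -/
noncomputable def wProgReduct {α : Type} (Z : Set (Lit α)) (Ω : Set (WRule α)) :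
    Set (HornRule α) :=
  { r : HornRule α | ∃ R ∈ Ω,
      (∀ C ∈ R.body, (weightSum Z C.S : EReal) ≤ C.U) ∧
      r.head ∈ posElems R.head.S ∧ r.head ∈ Z ∧
      r.body = R.body.map (fun C => C.lower.reduct Z) }

/-- `Z` is an answer set for the program `Ω` with weight constraints. -/
def WAnswerSet {α : Type} (Z : Set (Lit α)) (Ω : Set (WRule α)) : Prop :=
  LitConsistent Z ∧ wProgSat Z Ω ∧ cl (wProgReduct Z Ω) = Z

/-- Strong equivalence of programs with weight constraints. -/
def WStrongEq {α : Type} (Ω₁ Ω₂ : Set (WRule α)) : Prop :=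
  ∀ Ω : Set (WRule α), ∀ Z : Set (Lit α), WAnswerSet Z (Ω₁ ∪ Ω) ↔ WAnswerSet Z (Ω₂ ∪ Ω)

/-- A rule element as a formula: `l` becomes the literal `l`, `not l` becomes `naf l`. -/
def RElem.toFormula {α : Type} : RElem α → Formula α
  | .pos l => .lit l
  | .neg l => .naf (.lit l)

/-- The translation `[L ≤ S]`: the formula `⟨c₁,…,c_m⟩:{I : L ≤ Σ_{i∈I} wᵢ}`. -/
noncomputable def trLower {α : Type} (L : EReal) (S : List (RElem α × ℝ)) : Formula α :=
  angled (fun i : Fin S.length => (S.get i).1.toFormula)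
    (Finset.univ.filter fun I : Finset (Fin S.length) =>
      L ≤ ((∑ i ∈ I, (S.get i).2 : ℝ) : EReal))

/-- The translation `[S ≤ U]`: the formula `not ⟨c₁,…,c_m⟩:{I : U < Σ_{i∈I} wᵢ}`. -/
noncomputable def trUpper {α : Type} (S : List (RElem α × ℝ)) (U : EReal) : Formula α :=
  .naf (angled (fun i : Fin S.length => (S.get i).1.toFormula)
    (Finset.univ.filter fun I : Finset (Fin S.length) =>
      U < ((∑ i ∈ I, (S.get i).2 : ℝ) : EReal)))

/-- The translation `[L ≤ S ≤ U] = [L ≤ S],[S ≤ U]`. -/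
noncomputable def trWC {α : Type} (C : WConstraint α) : Formula α :=
  .conj (trLower C.L C.S) (trUpper C.S C.U)

/-- The formulas `l ; not l` for the positive rule elements `l` of `S`, in order. -/
def choiceFmls {α : Type} (S : List (RElem α × ℝ)) : List (Formula α) :=
  S.filterMap fun p =>
    match p.1 with
    | RElem.pos l => some (Formula.disj (.lit l) (.naf (.lit l)))
    | RElem.neg _ => none

/-- The translation of a rule with weight constraints `C₀ ← C₁,…,C_n`:
`(l₁; not l₁),…,(l_p; not l_p),[C₀] ← [C₁],…,[C_n]`. -/
noncomputable def trRule {α : Type} (R : WRule α) : NRule α :=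
  ⟨bigConj (choiceFmls R.head.S ++ [trWC R.head]), bigConj (R.body.map trWC)⟩

/-- The translation `[Ω]` of a program with weight constraints. -/
noncomputable def trProg {α : Type} (Ω : Set (WRule α)) : Set (NRule α) :=
  trRule '' Ω

/-- The nondisjunctive translation `[Ω]^{nd}`: each rule `C₀ ← C₁,…,C_n` is replaced
by the rules `l ← not not l, [C₁],…,[C_n]` for all positive rule elements `l` of `C₀`
together with `⊥ ← not [C₀], [C₁],…,[C_n]`. -/
noncomputable def ndTrans {α : Type} (Ω : Set (WRule α)) : Set (NRule α) :=
  { r : NRule α | ∃ R ∈ Ω,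
      (∃ l ∈ posElems R.head.S,
        r = ⟨.lit l, bigConj (.naf (.naf (.lit l)) :: R.body.map trWC)⟩) ∨
      r = ⟨.fbot, bigConj (.naf (trWC R.head) :: R.body.map trWC)⟩ }

/-- `Π₂`: the rules `⊥ ← not [C₀], [C₁],…,[C_n]` for all rules `C₀ ← C₁,…,C_n` of `Ω`. -/
noncomputable def constraintPart {α : Type} (Ω : Set (WRule α)) : Set (NRule α) :=
  { r : NRule α | ∃ R ∈ Ω,
      r = ⟨.fbot, bigConj (.naf (trWC R.head) :: R.body.map trWC)⟩ }

theorem sat_bigConj {α : Type} (Z : Set (Lit α)) (l : List (Formula α)) :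
    (bigConj l).sat Z ↔ ∀ F ∈ l, F.sat Z := by
  induction l with
  | nil => simp [bigConj, Formula.sat]
  | cons a l ih => simp [bigConj, Formula.sat, ih]

theorem sat_bigDisj {α : Type} (Z : Set (Lit α)) (l : List (Formula α)) :
    (bigDisj l).sat Z ↔ ∃ F ∈ l, F.sat Z := by
  induction l with
  | nil => simp [bigDisj, Formula.sat]
  | cons a l ih => simp [bigDisj, Formula.sat, ih]

theorem sat_angled {α : Type} (Z : Set (Lit α)) {n : ℕ} (F : Fin n → Formula α)
    (X : Finset (Finset (Fin n))) :
    (angled F X).sat Z ↔ ∃ I ∈ X, ∀ i ∈ I, (F i).sat Z := by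
  simp [angled, sat_bigDisj, sat_bigConj]

theorem sat_toFormula {α : Type} (Z : Set (Lit α)) (c : RElem α) :
    c.toFormula.sat Z ↔ c.sat Z := by
  cases c <;> simp [RElem.toFormula, Formula.sat, RElem.sat]

theorem weightSum_eq {α : Type} (Z : Set (Lit α)) (S : List (RElem α × ℝ)) :
    weightSum Z S = ∑ i ∈ Finset.univ.filter (fun i : Fin S.length => (S.get i).1.sat Z),
      (S.get i).2 := by
  rw [Finset.sum_filter]
  exact (Fin.sum_univ_fun_getElem S (fun p => if p.1.sat Z then p.2 else 0)).symm

theorem sum_le_weightSum {α : Type} (Z : Set (Lit α)) (S : List (RElem α × ℝ))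
    (h : ∀ p ∈ S, (0 : ℝ) ≤ p.2) (I : Finset (Fin S.length))
    (hI : ∀ i ∈ I, (S.get i).1.sat Z) :
    ∑ i ∈ I, (S.get i).2 ≤ weightSum Z S := by
  rw [weightSum_eq]
  apply Finset.sum_le_sum_of_subset_of_nonneg
  · intro i hi
    exact Finset.mem_filter.2 ⟨Finset.mem_univ _, hI i hi⟩
  · intro i _ _
    exact h _ (List.get_mem _ _)

theorem sat_angled_up {α : Type} (Z : Set (Lit α)) (S : List (RElem α × ℝ))
    (h : ∀ p ∈ S, (0 : ℝ) ≤ p.2) (P : ℝ → Prop) (hP : ∀ x y, x ≤ y → P x → P y)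
    (X : Finset (Finset (Fin S.length))) (hX : ∀ I, I ∈ X ↔ P (∑ i ∈ I, (S.get i).2)) :
    (angled (fun i : Fin S.length => (S.get i).1.toFormula) X).sat Z ↔ P (weightSum Z S) := by
  rw [sat_angled]
  constructor
  · rintro ⟨I, hI, hs⟩
    refine hP _ _ (sum_le_weightSum Z S h I fun i hi => (sat_toFormula Z _).1 (hs i hi)) ?_
    exact (hX I).1 hI
  · intro hw
    refine ⟨Finset.univ.filter (fun i : Fin S.length => (S.get i).1.sat Z), ?_, ?_⟩
    · rw [weightSum_eq] at hw
      exact (hX _).2 hw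
    · intro i hi
      exact (sat_toFormula Z _).2 (Finset.mem_filter.1 hi).2

theorem sat_trWC {α : Type} (Z : Set (Lit α)) (C : WConstraint α) :
    (trWC C).sat Z ↔ C.sat Z := by
  refine and_congr ?_ ((not_congr ?_).trans not_lt)
  · exact sat_angled_up Z C.S C.nonneg (fun x => C.L ≤ (x : EReal))
      (fun x y hxy hx => hx.trans (EReal.coe_le_coe_iff.2 hxy)) _ (fun I => by simp)
  · exact sat_angled_up Z C.S C.nonneg (fun x => C.U < (x : EReal))
      (fun x y hxy hx => hx.trans_le (EReal.coe_le_coe_iff.2 hxy)) _ (fun I => by simp)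

/-- For any consistent set `Z` of literals, `Z ⊨ Ω` iff `Z ⊨ Π₂`. -/
theorem wProgSat_iff_constraintPart (Ω : Set (WRule ℕ)) (Z : Set (Lit ℕ))
    (hZ : LitConsistent Z) :
    wProgSat Z Ω ↔ progSat Z (constraintPart Ω) := by
  constructor
  · rintro h r ⟨R, hR, rfl⟩ hb
    rw [sat_bigConj] at hb
    simp only [List.mem_cons, List.mem_map, forall_eq_or_imp, forall_exists_index, and_imp,
      forall_apply_eq_imp_iff₂, Formula.sat, sat_trWC] at hb
    exact hb.1 (h R hR hb.2)
  · intro h R hR hb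
    by_contra hn
    refine h _ ⟨R, hR, rfl⟩ ?_
    rw [sat_bigConj]
    simp only [List.mem_cons, List.mem_map, forall_eq_or_imp, forall_exists_index, and_imp,
      forall_apply_eq_imp_iff₂, Formula.sat, sat_trWC]
    exact ⟨hn, hb⟩
end

section
/- (Completion Lemma) Let Π be a program with nested expressions, and let Q be a set of atoms none of which has a regular occurrence in the head of any rule of Π. For every q ∈ Q, let Def(q) be a formula. Then the program Π ∪ {q ← Def(q) : q ∈ Q} has the same answer sets as the program Π ∪ {q ← Def(q) : q ∈ Q} ∪ {Def(q) ← q : q ∈ Q}. -/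
open Classical

/-- The literals occurring in a formula (every occurrence of a literal is regular,
since literals are atomic in this syntax). -/
def Formula.lits {α : Type} : Formula α → Set (Lit α)
  | .lit l => {l}
  | .fbot => ∅
  | .ftop => ∅
  | .naf F => F.lits
  | .conj F G => F.lits ∪ G.lits
  | .disj F G => F.lits ∪ G.lits

theorem reduct_sat_mono {α : Type} (Z W W' : Set (Lit α)) (h : W ⊆ W') (F : Formula α) :
    (F.reduct Z).sat W → (F.reduct Z).sat W' := by
  induction F with
  | lit l => exact fun hl => h hl
  | fbot => exact id
  | ftop => exact id
  | naf F _ =>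
    simp only [Formula.reduct]
    split_ifs <;> exact id
  | conj F G ihF ihG => exact fun hs => ⟨ihF hs.1, ihG hs.2⟩
  | disj F G ihF ihG => exact fun hs => hs.imp ihF ihG

theorem reduct_sat_agree {α : Type} (Z W W' : Set (Lit α)) (F : Formula α)
    (h : ∀ l ∈ F.lits, l ∈ W → l ∈ W') :
    (F.reduct Z).sat W → (F.reduct Z).sat W' := by
  induction F with
  | lit l => exact fun hl => h l rfl hl
  | fbot => exact id
  | ftop => exact id
  | naf F _ =>
    simp only [Formula.reduct]
    split_ifs <;> exact id
  | conj F G ihF ihG =>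
    exact fun hs => ⟨ihF (fun l hl => h l (Or.inl hl)) hs.1, ihG (fun l hl => h l (Or.inr hl)) hs.2⟩
  | disj F G ihF ihG =>
    exact fun hs => hs.imp (ihF (fun l hl => h l (Or.inl hl))) (ihG (fun l hl => h l (Or.inr hl)))

theorem progSat_reduct_iff {α : Type} (Z W : Set (Lit α)) (P : Set (NRule α)) :
    progSat W (progReduct Z P) ↔
      ∀ r ∈ P, (r.body.reduct Z).sat W → (r.head.reduct Z).sat W := by
  simp [progSat, progReduct]

theorem progSat_one_iff (Z W : Set (Lit ℕ)) (P : Set (NRule ℕ)) (Q : Set ℕ)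
    (Def : ℕ → Formula ℕ) :
    progSat W (progReduct Z (P ∪ {r : NRule ℕ | ∃ q ∈ Q, r = ⟨.lit (.pos q), Def q⟩})) ↔
      progSat W (progReduct Z P) ∧ ∀ q ∈ Q, ((Def q).reduct Z).sat W → Lit.pos q ∈ W := by
  simp only [progSat_reduct_iff]
  constructor
  · exact fun h => ⟨fun r hr => h r (Or.inl hr), fun q hq => h _ (Or.inr ⟨q, hq, rfl⟩)⟩
  · rintro ⟨h1, h2⟩ r (hr | ⟨q, hq, rfl⟩)
    · exact h1 r hr
    · exact h2 q hq

theorem progSat_two_iff (Z W : Set (Lit ℕ)) (P : Set (NRule ℕ)) (Q : Set ℕ)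
    (Def : ℕ → Formula ℕ) :
    progSat W (progReduct Z (P ∪ {r : NRule ℕ | ∃ q ∈ Q, r = ⟨Def q, .lit (.pos q)⟩})) ↔
      progSat W (progReduct Z P) ∧ ∀ q ∈ Q, Lit.pos q ∈ W → ((Def q).reduct Z).sat W := by
  simp only [progSat_reduct_iff]
  constructor
  · exact fun h => ⟨fun r hr => h r (Or.inl hr), fun q hq => h _ (Or.inr ⟨q, hq, rfl⟩)⟩
  · rintro ⟨h1, h2⟩ r (hr | ⟨q, hq, rfl⟩)
    · exact h1 r hr
    · exact h2 q hq

/-- Removing literals of `Q` preserves the reduct of `P`. -/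
theorem progSat_shrink (Z W W' : Set (Lit ℕ)) (P : Set (NRule ℕ)) (Q : Set ℕ)
    (hQ : ∀ q ∈ Q, ∀ r ∈ P, Lit.pos q ∉ r.head.lits)
    (hsub : W ⊆ W') (hag : ∀ l ∈ W', (∀ q ∈ Q, l ≠ Lit.pos q) → l ∈ W)
    (h : progSat W' (progReduct Z P)) : progSat W (progReduct Z P) := by
  rw [progSat_reduct_iff] at h ⊢
  intro r hr hb
  refine reduct_sat_agree Z W' W _ ?_ (h r hr (reduct_sat_mono Z W W' hsub _ hb))
  intro l hl hl'
  refine hag l hl' ?_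
  rintro q hq rfl
  exact hQ q hq r hr hl

/-- Removing one unsupported atom preserves the rules `q ← Def q`. -/
theorem def_shrink (Z W : Set (Lit ℕ)) (Q : Set ℕ) (Def : ℕ → Formula ℕ) (q : ℕ)
    (h : ∀ p ∈ Q, ((Def p).reduct Z).sat W → Lit.pos p ∈ W)
    (hn : ¬ ((Def q).reduct Z).sat W) :
    ∀ p ∈ Q, ((Def p).reduct Z).sat (W \ {Lit.pos q}) → Lit.pos p ∈ W \ {Lit.pos q} := by
  intro p hp hs
  have hs' := reduct_sat_mono Z _ W Set.diff_subset _ hs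
  refine ⟨h p hp hs', ?_⟩
  intro he
  have : p = q := Lit.pos.inj he
  subst this
  exact hn hs'

/-- Completion Lemma: if no atom of `Q` has a regular occurrence in the head of a rule
of `P` (a regular occurrence of atom `q` being an occurrence of the literal `q`, not of
`¬ q`), then `P ∪ {q ← Def q : q ∈ Q}` has the same answer sets as
`P ∪ {q ← Def q : q ∈ Q} ∪ {Def q ← q : q ∈ Q}`. -/
theorem completion_lemma (P : Set (NRule ℕ)) (Q : Set ℕ) (Def : ℕ → Formula ℕ)
    (hQ : ∀ q ∈ Q, ∀ r ∈ P, Lit.pos q ∉ r.head.lits) :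
    ∀ Z : Set (Lit ℕ),
      AnswerSet Z (P ∪ {r : NRule ℕ | ∃ q ∈ Q, r = ⟨.lit (.pos q), Def q⟩}) ↔
      AnswerSet Z ((P ∪ {r : NRule ℕ | ∃ q ∈ Q, r = ⟨.lit (.pos q), Def q⟩}) ∪
        {r : NRule ℕ | ∃ q ∈ Q, r = ⟨Def q, .lit (.pos q)⟩}) := by
  intro Z
  unfold AnswerSet MinimalSat
  simp only [progSat_two_iff, progSat_one_iff]
  constructor
  · rintro ⟨hc, ⟨hP, hD⟩, hmin⟩
    refine ⟨hc, ⟨⟨hP, hD⟩, ?_⟩, fun Z' hc' h' => hmin Z' hc' h'.1⟩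
    intro q hq hqZ
    by_contra hn
    have he := hmin (Z \ {Lit.pos q}) (fun a ha => hc a ⟨ha.1.1, ha.2.1⟩)
      ⟨progSat_shrink Z _ Z P Q hQ Set.diff_subset (fun l hl hne => ⟨hl, hne q hq⟩) hP,
        def_shrink Z Z Q Def q hD hn⟩ Set.diff_subset
    rw [← he] at hqZ
    exact hqZ.2 rfl
  · rintro ⟨hc, ⟨⟨hP, hD⟩, hS⟩, hmin⟩
    refine ⟨hc, ⟨hP, hD⟩, ?_⟩
    rintro Z' hc' ⟨hP', hD'⟩ hsub
    let C : Set (Set (Lit ℕ)) := {W | W ⊆ Z' ∧ (∀ l ∈ Z', (∀ q ∈ Q, l ≠ Lit.pos q) → l ∈ W) ∧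
      ∀ p ∈ Q, ((Def p).reduct Z).sat W → Lit.pos p ∈ W}
    have hZ' : Z' ∈ C := ⟨subset_rfl, fun l hl _ => hl, hD'⟩
    have hM : ⋂₀ C ∈ C := by
      refine ⟨Set.sInter_subset_of_mem hZ', fun l hl hne W hW => hW.2.1 l hl hne, ?_⟩
      intro p hp hs W hW
      exact hW.2.2 p hp (reduct_sat_mono Z _ W (Set.sInter_subset_of_mem hW) _ hs)
    have he : ⋂₀ C = Z := by
      refine hmin _ (fun a ha => hc' a ⟨hM.1 ha.1, hM.1 ha.2⟩)
        ⟨⟨progSat_shrink Z _ Z' P Q hQ hM.1 hM.2.1 hP', hM.2.2⟩, ?_⟩ (hM.1.trans hsub)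
      intro q hq hqM
      by_contra hn
      have hR : ⋂₀ C \ {Lit.pos q} ∈ C :=
        ⟨Set.diff_subset.trans hM.1, fun l hl hne => ⟨hM.2.1 l hl hne, hne q hq⟩,
          def_shrink Z _ Q Def q hM.2.2 hn⟩
      exact (hqM _ hR).2 rfl
    exact hsub.antisymm (he ▸ hM.1)
end
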